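/- There does not exist T ∈ (0,1) such that both Z(T) and F(T) = −T log₂ Z(T) are computable real numbers. -/

import Mathlib

open Filter

/-- A real number `α` is computable if some total recursive `f : ℕ+ → ℚ`
satisfies `|α - f n| < 1/n` for all `n`. -/
def ComputableReal (α : ℝ) : Prop :=
  ∃ f : ℕ+ → ℚ, Computable f ∧ ∀ n : ℕ+, |α - (f n : ℝ)| < 1 / (n : ℝ)

/-- A partial function on binary strings has prefix-free domain. -/
def PrefixFree (C : List Bool →. List Bool) : Prop :=
  ∀ p q : List Bool, (C p).Dom → (C q).Dom → p <+: q → p = q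

/-- `U` is an optimal prefix-free machine (universal self-delimiting Turing machine). -/
def OptimalMachine (U : List Bool →. List Bool) : Prop :=
  Partrec U ∧ PrefixFree U ∧
    ∀ C : List Bool →. List Bool, Partrec C → PrefixFree C →
      ∃ d : ℕ, ∀ p s, s ∈ C p → ∃ p', s ∈ U p' ∧ p'.length ≤ p.length + d

/-- Program-size (prefix-free Kolmogorov) complexity of `s` with respect to `U`. -/
noncomputable def complexity (U : List Bool →. List Bool) (s : List Bool) : ℕ :=
  sInf {n | ∃ p : List Bool, p.length = n ∧ s ∈ U p}

/-- The `i`-th bit (0-indexed) of the base-two expansion of the fractional part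
of `α`, in the expansion with infinitely many zeros. -/
noncomputable def bitOf (α : ℝ) (i : ℕ) : Bool := decide (⌊Int.fract α * 2 ^ (i + 1)⌋ % 2 = 1)

/-- The first `n` bits of the base-two expansion of `α - ⌊α⌋`
(with infinitely many zeros). -/
noncomputable def firstBits (α : ℝ) (n : ℕ) : List Bool := (List.range n).map (bitOf α)

/-- `α` is weakly Chaitin `T`-random: `∃ c, ∀ n, T·n − c ≤ H(α_n)`. -/
def WeaklyChaitinTRandom (U : List Bool →. List Bool) (T α : ℝ) : Prop :=
  ∃ c : ℕ, ∀ n : ℕ+, T * (n : ℝ) - (c : ℝ) ≤ (complexity U (firstBits α n) : ℝ)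

/-- `α` is `T`-compressible: `limsup H(α_n)/n ≤ T`. -/
def TCompressible (U : List Bool →. List Bool) (T α : ℝ) : Prop :=
  Filter.limsup (fun n : ℕ => (complexity U (firstBits α n) : ℝ) / (n : ℝ)) atTop ≤ T

/-- The partition function `Z(T) = ∑_{p ∈ dom U} 2^{-|p|/T}`. -/
noncomputable def Zfun (U : List Bool →. List Bool) (T : ℝ) : ℝ :=
  ∑' p : {p : List Bool // (U p).Dom}, (2 : ℝ) ^ (-((p : List Bool).length : ℝ) / T)

/-- The free energy `F(T) = -T log₂ Z(T)`. -/
noncomputable def Ffun (U : List Bool →. List Bool) (T : ℝ) : ℝ :=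
  -T * Real.logb 2 (Zfun U T)

/-!
Put `x = 2 ^ (-1 / T)`, so that `Z(T) = ∑ x ^ |p|` over `p ∈ dom U` and `Z(T) = x ^ F(T)`. Suppose
that `Z(T)` is computable and that `F(T)` is approximable from below. For rational `r ≥ 0`, the
inequality `r < x` holds iff `r ^ q < Z(T)` for some rational `0 ≤ q < F(T)`, so `x` is approximable
from below without `T` ever being computed. Now `p ∉ dom U` becomes semidecidable: it holds iff, for
some rational `0 ≤ r < x`, the sum of `r ^ |q|` over finitely many enumerated `q ∈ dom U` together
with `p` itself exceeds `Z(T)`. Hence `dom U` is decidable.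

The domain of an optimal machine is not decidable. Otherwise the length of the output of a program
of length at most `n` would be bounded by a computable `B n`, whereas a string of more than `B (2k)`
ones is computable from `k`, hence the output of a program of length `k + O(1)`.
-/

section RecursivelyEnumerable

variable {α β : Type*} [Primcodable α] [Primcodable β]

theorem rePred_comp {p : β → Prop} (hp : REPred p) {f : α → β} (hf : Computable f) :
    REPred fun a => p (f a) :=
  Partrec.comp hp hf

theorem rePred_lt {f g : α → ℕ} (hf : Computable f) (hg : Computable g) :
    REPred fun a => f a < g a :=
  rePred_comp (p := fun q : ℕ × ℕ => q.1 < q.2) Primrec.nat_lt.computablePred.to_re (hf.pair hg)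

theorem rePred_eq {f g : α → ℕ} (hf : Computable f) (hg : Computable g) :
    REPred fun a => f a = g a :=
  rePred_comp (p := fun q : ℕ × ℕ => q.1 = q.2) Primrec.eq.computablePred.to_re (hf.pair hg)

theorem rePred_exists_of_computable {g : α → β → Bool} (hg : Computable₂ g) :
    REPred fun a => ∃ b, g a b = true := by
  let test : α × ℕ → Option β → Bool := fun x o => Option.casesOn o false (g x.1)
  have htest : Computable₂ fun (a : α) (n : ℕ) => test (a, n) (Encodable.decode n) :=
    Computable.option_casesOn (Computable.decode.comp Computable.snd) (Computable.const false)
      (hg.comp (Computable.fst.comp Computable.fst) Computable.snd).to₂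
  refine (Partrec.rfind htest.partrec₂).dom_re.of_eq fun a => ?_
  simp only [PFun.coe_val, Nat.rfind_dom, Part.mem_some_iff, Part.some_dom, implies_true, and_true,
    test]
  constructor
  · rintro ⟨n, hn⟩
    cases h : Encodable.decode (α := β) n with
    | none => simp [h] at hn
    | some b => exact ⟨b, by simpa [h] using hn.symm⟩
  · rintro ⟨b, hb⟩
    exact ⟨Encodable.encode b, by simp [hb]⟩

theorem exists_monotone_stages {p : α → Prop} (hp : REPred p) :
    ∃ H : α → ℕ → Bool, Computable₂ H ∧ (∀ a, Monotone (H a)) ∧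
      ∀ a, p a ↔ ∃ k, H a k = true := by
  obtain ⟨c, hc⟩ := Nat.Partrec.Code.exists_code.1 hp
  refine ⟨fun a k => (c.evaln k (Encodable.encode a)).isSome, ?_, ?_, ?_⟩
  · exact (Primrec.option_isSome.comp <| Nat.Partrec.Code.primrec_evaln.comp <|
      (Primrec.snd.pair (Primrec.const c)).pair (Primrec.encode.comp Primrec.fst)).to_comp
  · intro a k l hkl
    refine Bool.le_iff_imp.2 fun h => ?_
    obtain ⟨y, hy⟩ := Option.isSome_iff_exists.1 h
    exact Option.isSome_iff_exists.2 ⟨y, Nat.Partrec.Code.evaln_mono hkl hy⟩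
  · intro a
    have heval : p a ↔ (c.eval (Encodable.encode a)).Dom := by
      rw [hc]; simp [Part.assert]
    simp only [heval, Part.dom_iff_mem, Nat.Partrec.Code.evaln_complete,
      Option.isSome_iff_exists, Option.mem_def]
    exact exists_comm

theorem rePred_and {p q : α → Prop} (hp : REPred p) (hq : REPred q) :
    REPred fun a => p a ∧ q a := by
  obtain ⟨H, hH, -, hpH⟩ := exists_monotone_stages hp
  obtain ⟨K, hK, -, hqK⟩ := exists_monotone_stages hq
  have hHK : Computable₂ fun a (n : ℕ × ℕ) => H a n.1 && K a n.2 :=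
    Primrec.and.to_comp.comp
      (hH.comp Computable.fst (Computable.fst.comp Computable.snd))
      (hK.comp Computable.fst (Computable.snd.comp Computable.snd))
  refine (rePred_exists_of_computable hHK).of_eq fun a => ?_
  simp only [hpH, hqK, Prod.exists, Bool.and_eq_true, exists_and_left, exists_and_right]

theorem rePred_exists {p : α → β → Prop} (hp : REPred fun x : α × β => p x.1 x.2) :
    REPred fun a => ∃ b, p a b := by
  obtain ⟨H, hH, -, hpH⟩ := exists_monotone_stages hp
  have hH' : Computable₂ fun a (x : β × ℕ) => H (a, x.1) x.2 :=
    hH.comp (Computable.fst.pair (Computable.fst.comp Computable.snd))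
      (Computable.snd.comp Computable.snd)
  refine (rePred_exists_of_computable hH').of_eq fun a => ?_
  simp only [Prod.exists, ← hpH (a, _)]

theorem exists_computable_extension [Inhabited β] {f : α →. β} (hf : Partrec f)
    (hdom : ComputablePred fun a => (f a).Dom) :
    ∃ g : α → β, Computable g ∧ ∀ a, ∀ b ∈ f a, g a = b := by
  classical
  obtain ⟨_, hdec⟩ := hdom
  have hcond : Partrec fun a => bif decide (f a).Dom then f a else Part.some default :=
    Partrec.cond hdec hf (Computable.const default).partrec
  refine ⟨fun a => (f a).getOrElse default, hcond.of_eq_tot fun a => ?_, fun a b hb => ?_⟩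
  · by_cases h : (f a).Dom <;> simp [h, Part.getOrElse, Part.get_mem]
  · have h : (f a).Dom := Part.dom_iff_mem.2 ⟨b, hb⟩
    exact (Part.getOrElse_of_dom _ h _).trans (Part.get_eq_of_mem hb _)

end RecursivelyEnumerable

section Arithmetic

theorem computable_sum_range {α : Type*} [Primcodable α] {f : α → ℕ → ℕ} {g : α → ℕ}
    (hf : Computable₂ f) (hg : Computable g) :
    Computable fun a => ∑ i ∈ Finset.range (g a), f a i := by
  have hrec : Computable fun a =>
      Nat.rec (motive := fun _ => ℕ) 0 (fun n s => s + f a n) (g a) :=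
    Computable.nat_rec (h := fun a x => x.2 + f a x.1) hg (Computable.const 0)
      (Primrec.nat_add.to_comp.comp (Computable.snd.comp Computable.snd)
        (hf.comp Computable.fst (Computable.fst.comp Computable.snd)))
  refine hrec.of_eq fun a => ?_
  induction g a with
  | zero => rfl
  | succ n ih => rw [Finset.sum_range_succ, ← ih]

theorem primrec_pow : Primrec₂ ((· ^ ·) : ℕ → ℕ → ℕ) :=
  Primrec₂.unpaired'.1 Nat.Primrec.pow

theorem primrecRel_coprime : PrimrecRel Nat.Coprime := by
  have hdvd : PrimrecRel fun (x : ℕ) (ab : ℕ × ℕ) => ¬ (ab.1 % x = 0 ∧ ab.2 % x = 0) ∨ x = 1 := by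
    refine PrimrecPred.or (PrimrecPred.not (PrimrecPred.and ?_ ?_)) ?_
    · exact Primrec.eq.comp
        (Primrec.nat_mod.comp (Primrec.fst.comp Primrec.snd) Primrec.fst) (Primrec.const 0)
    · exact Primrec.eq.comp
        (Primrec.nat_mod.comp (Primrec.snd.comp Primrec.snd) Primrec.fst) (Primrec.const 0)
    · exact Primrec.eq.comp Primrec.fst (Primrec.const 1)
  have hrange : Primrec fun ab : ℕ × ℕ => List.range (ab.1 + ab.2 + 1) :=
    Primrec.list_range.comp (Primrec.succ.comp (Primrec.nat_add.comp Primrec.fst Primrec.snd))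
  refine (hdvd.forall_mem_list.comp hrange Primrec.id).of_eq fun ab => ?_
  simp only [List.mem_range, ← Nat.dvd_iff_mod_eq_zero, id, ← imp_iff_not_or]
  constructor
  · intro h
    refine h _ ?_ ⟨Nat.gcd_dvd_left _ _, Nat.gcd_dvd_right _ _⟩
    rcases Nat.eq_zero_or_pos ab.1 with h0 | h0
    · simp [h0]
    · exact (Nat.gcd_le_left _ h0).trans_lt (by omega)
  · exact fun h x _ hx => Nat.eq_one_of_dvd_coprimes h hx.1 hx.2

theorem computable_nth {p : ℕ → Prop} (hp : PrimrecPred p) (hinf : {n | p n}.Infinite) :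
    Computable (Nat.nth p) := by
  classical
  have hcount : Primrec (Nat.count p) :=
    (Primrec.list_length.comp ((Primrec.listFilter hp).comp Primrec.list_range)).of_eq fun n => by
      rw [Nat.count, List.countP_eq_length_filter]
  have hex : ∀ n, ∃ m, p m ∧ Nat.count p m = n := fun n =>
    ⟨Nat.nth p n, Nat.nth_mem_of_infinite hinf n, Nat.count_nth_of_infinite hinf n⟩
  have hprim : PrimrecRel fun n m => p m ∧ Nat.count p m = n :=
    (hp.comp Primrec.snd).and (Primrec.eq.comp (hcount.comp Primrec.snd) Primrec.fst)
  refine (Computable.find hprim.computablePred hex).of_eq fun n => ?_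
  obtain ⟨hmem, hn⟩ := Nat.find_spec (hex n)
  rw [← Nat.nth_count hmem, hn]

-- `Denumerable.ofEncodableOfInfinite` renumbers the range of `E.encode` in increasing order, so the
-- original code of `a` is recovered as the element of that range whose rank is the new code.
theorem computable_encode_of_primrecPred_range (α : Type*) [E : Encodable α] [Infinite α]
    (h : PrimrecPred fun m => m ∈ Set.range E.encode) :
    @Computable α ℕ (@Primcodable.ofDenumerable α (Denumerable.ofEncodableOfInfinite α)) _
      E.encode := by
  classical
  let D := Denumerable.ofEncodableOfInfinite α
  have hrank : Computable fun a : α => D.encode a := Computable.encode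
  refine ((computable_nth h (Set.infinite_range_of_injective E.encode_injective)).comp
    hrank).of_eq fun a => ?_
  have hcount : D.encode a = Nat.count (· ∈ Set.range E.encode) (E.encode a) := by
    let := @Encodable.decidableRangeEncode α E
    change (List.range (E.encode a)).countP (· ∈ Set.range E.encode) = _
    rw [Nat.count]
    congr!
  rw [hcount, Nat.nth_count (Set.mem_range_self a)]

end Arithmetic

section Rational

theorem encode_int_natAbs (z : ℤ) : (Encodable.encode z + 1) / 2 = z.natAbs := by
  cases z with
  | ofNat a => change (2 * a + 1) / 2 = a; omega
  | negSucc a => change (2 * a + 1 + 1) / 2 = a + 1; omega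

theorem encode_int_toNat (z : ℤ) :
    (if Encodable.encode z % 2 = 0 then Encodable.encode z / 2 else 0) = z.toNat := by
  cases z with
  | ofNat a =>
    change (if (2 * a) % 2 = 0 then 2 * a / 2 else 0) = a
    rw [if_pos (Nat.mul_mod_right 2 a), Nat.mul_div_cancel_left a two_pos]
  | negSucc a => exact if_neg (by change ¬ (2 * a + 1) % 2 = 0; omega)

theorem primrec_int_toNat : Primrec Int.toNat := by
  refine (Primrec.ite ?_ ?_ (Primrec.const 0)).of_eq encode_int_toNat
  · exact Primrec.eq.comp (Primrec.nat_mod.comp Primrec.encode (Primrec.const 2))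
      (Primrec.const 0)
  · exact Primrec.nat_div.comp Primrec.encode (Primrec.const 2)

theorem primrec_int_natAbs : Primrec Int.natAbs :=
  (Primrec.nat_div.comp (Primrec.succ.comp Primrec.encode) (Primrec.const 2)).of_eq
    encode_int_natAbs

theorem mem_range_encode_rat (m : ℕ) :
    m ∈ Set.range (Rat.instEncodable.encode) ↔
      0 < m.unpair.2 ∧ Nat.Coprime (Denumerable.ofNat ℤ m.unpair.1).natAbs m.unpair.2 := by
  constructor
  · rintro ⟨q, rfl⟩
    change 0 < (Nat.pair (Encodable.encode q.num) q.den).unpair.2 ∧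
      (Denumerable.ofNat ℤ (Nat.pair (Encodable.encode q.num) q.den).unpair.1).natAbs.Coprime
        (Nat.pair (Encodable.encode q.num) q.den).unpair.2
    rw [Nat.unpair_pair, Denumerable.ofNat_encode]
    exact ⟨q.pos, q.reduced⟩
  · rintro ⟨hpos, hcop⟩
    refine ⟨⟨Denumerable.ofNat ℤ m.unpair.1, m.unpair.2, hpos.ne', hcop⟩, ?_⟩
    change Nat.pair (Encodable.encode (Denumerable.ofNat ℤ m.unpair.1)) m.unpair.2 = m
    rw [Denumerable.encode_ofNat, Nat.pair_unpair]

theorem computable_encode_rat : Computable Rat.instEncodable.encode := by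
  refine computable_encode_of_primrecPred_range ℚ (PrimrecPred.of_eq ?_ fun m =>
    (mem_range_encode_rat m).symm)
  have hnum : Primrec fun m : ℕ => m.unpair.1 := Primrec.fst.comp Primrec.unpair
  have hden : Primrec fun m : ℕ => m.unpair.2 := Primrec.snd.comp Primrec.unpair
  exact (Primrec.nat_lt.comp (Primrec.const 0) hden).and
    (primrecRel_coprime.comp (primrec_int_natAbs.comp ((Primrec.ofNat ℤ).comp hnum)) hden)

theorem computable_rat_num : Computable Rat.num := by
  refine ((Computable.ofNat ℤ).comp ((Computable.fst.comp Computable.unpair).comp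
    computable_encode_rat)).of_eq fun q => ?_
  change Denumerable.ofNat ℤ (Nat.pair (Encodable.encode q.num) q.den).unpair.1 = q.num
  rw [Nat.unpair_pair, Denumerable.ofNat_encode]

theorem computable_rat_den : Computable Rat.den := by
  refine ((Computable.snd.comp Computable.unpair).comp computable_encode_rat).of_eq fun q => ?_
  change (Nat.pair (Encodable.encode q.num) q.den).unpair.2 = q.den
  rw [Nat.unpair_pair]

end Rational

/-- `α` is left-computably enumerable: its lower rational cut is semidecidable. A fraction is given
by its numerator and denominator; the cut is multiplied out, so a zero denominator is harmless. -/
def LeftCE (α : ℝ) : Prop :=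
  REPred fun r : ℕ × ℕ => (r.1 : ℝ) < α * r.2

/-- `α` is right-computably enumerable: its upper rational cut is semidecidable, with fractions
encoded as in `LeftCE`. -/
def RightCE (α : ℝ) : Prop :=
  REPred fun r : ℕ × ℕ => α * r.2 < r.1

theorem lt_mul_iff_exists_approx {α : ℝ} {N : ℕ → ℝ} (hN : ∀ n : ℕ, |α * (n + 1) - N n| ≤ 2)
    {a b : ℝ} (hb : 0 ≤ b) : a < α * b ↔ ∃ n : ℕ, a * (n + 1) + 2 * b < N n * b := by
  constructor
  · intro hab
    obtain ⟨n, hn⟩ := exists_nat_gt (4 * b / (α * b - a))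
    have hgap : 4 * b < n * (α * b - a) := (div_lt_iff₀ (sub_pos.2 hab)).1 hn
    have hbelow := mul_le_mul_of_nonneg_right (abs_le.1 (hN n)).2 hb
    exact ⟨n, by linarith⟩
  · rintro ⟨n, hn⟩
    have habove := mul_le_mul_of_nonneg_right (abs_le.1 (hN n)).1 hb
    refine lt_of_mul_lt_mul_right ?_ n.cast_add_one_pos.le
    linarith

theorem num_toNat_mul_div_den (q : ℚ) (k : ℕ) :
    q.num.toNat * k / q.den = ⌊max (q : ℝ) 0 * k⌋₊ := by
  have hnum : (q.num.toNat : ℝ) = max (q.num : ℝ) 0 := by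
    exact_mod_cast congrArg (Int.cast : ℤ → ℝ) (Int.ofNat_toNat q.num)
  have hq : max (q : ℝ) 0 = q.num.toNat / q.den := by
    rw [hnum, ← max_div_div_right q.den.cast_nonneg, zero_div, ← Rat.cast_def]
  rw [hq, div_mul_eq_mul_div, ← Nat.cast_mul, Nat.floor_div_eq_div]

namespace ComputableReal

theorem exists_nat_approx {α : ℝ} (h : ComputableReal α) :
    ∃ N : ℕ → ℕ, Computable N ∧ ∀ n : ℕ, |max α 0 * (n + 1) - N n| ≤ 2 := by
  obtain ⟨f, hf, hα⟩ := h
  have hf' : Computable fun n : ℕ => f n.succPNat := hf.comp (Computable.ofNat ℕ+)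
  refine ⟨fun n => (f n.succPNat).num.toNat * (n + 1) / (f n.succPNat).den,
    Primrec.nat_div.to_comp.comp (Primrec.nat_mul.to_comp.comp
      (primrec_int_toNat.to_comp.comp (computable_rat_num.comp hf')) Computable.succ)
      (computable_rat_den.comp hf'), fun n => ?_⟩
  set q := f n.succPNat
  have hclose : |max α 0 - max (q : ℝ) 0| < 1 / ((n : ℝ) + 1) :=
    (by simpa using abs_max_sub_max_le_max α 0 (q : ℝ) 0 : _ ≤ |α - q|).trans_lt
      (by simpa using hα n.succPNat)
  have hn : (0 : ℝ) < n + 1 := n.cast_add_one_pos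
  have hscaled : |(max α 0 - max (q : ℝ) 0) * (n + 1)| < 1 := by
    rwa [abs_mul, abs_of_pos hn, ← lt_div_iff₀ hn]
  change |max α 0 * (n + 1) - (q.num.toNat * (n + 1) / q.den : ℕ)| ≤ 2
  rw [num_toNat_mul_div_den, Nat.cast_add_one, abs_le]
  have hle := Nat.floor_le (mul_nonneg (le_max_right (q : ℝ) 0) hn.le)
  have hlt := Nat.lt_floor_add_one (max (q : ℝ) 0 * (n + 1))
  constructor <;> linarith [(abs_lt.1 hscaled).1, (abs_lt.1 hscaled).2]

theorem leftCE {α : ℝ} (h : ComputableReal α) : LeftCE α := by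
  obtain ⟨N, hN, hα⟩ := h.exists_nat_approx
  have hmul := Primrec.nat_mul.to_comp
  have hre : REPred fun r : ℕ × ℕ => ∃ n, r.1 * (n + 1) + 2 * r.2 < N n * r.2 :=
    rePred_exists <| rePred_lt
      (Primrec.nat_add.to_comp.comp
        (hmul.comp (Computable.fst.comp Computable.fst) (Computable.succ.comp Computable.snd))
        (hmul.comp (Computable.const 2) (Computable.snd.comp Computable.fst)))
      (hmul.comp (hN.comp Computable.snd) (Computable.snd.comp Computable.fst))
  refine hre.of_eq fun ⟨a, b⟩ => ?_
  have hmax : (a : ℝ) < α * b ↔ (a : ℝ) < max α 0 * b := by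
    rw [max_mul_of_nonneg _ _ b.cast_nonneg, zero_mul, lt_max_iff,
      or_iff_left a.cast_nonneg.not_gt]
  rw [hmax, lt_mul_iff_exists_approx hα b.cast_nonneg]
  exact_mod_cast Iff.rfl

theorem rightCE {α : ℝ} (h : ComputableReal α) (h0 : 0 ≤ α) : RightCE α := by
  obtain ⟨N, hN, hα⟩ := h.exists_nat_approx
  rw [max_eq_left h0] at hα
  have hmul := Primrec.nat_mul.to_comp
  have hre : REPred fun r : ℕ × ℕ => ∃ n, N n * r.2 + 2 * r.2 < r.1 * (n + 1) :=
    rePred_exists <| rePred_lt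
      (Primrec.nat_add.to_comp.comp
        (hmul.comp (hN.comp Computable.snd) (Computable.snd.comp Computable.fst))
        (hmul.comp (Computable.const 2) (Computable.snd.comp Computable.fst)))
      (hmul.comp (Computable.fst.comp Computable.fst) (Computable.succ.comp Computable.snd))
  refine hre.of_eq fun ⟨a, b⟩ => ?_
  have hneg (n : ℕ) : |-α * (n + 1) - -(N n : ℝ)| ≤ 2 := by
    rw [neg_mul, ← neg_sub', abs_neg]
    exact hα n
  rw [← neg_lt_neg_iff, ← neg_mul, lt_mul_iff_exists_approx hneg b.cast_nonneg]
  refine exists_congr fun n => ?_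
  rw [neg_mul, neg_mul, neg_add_lt_iff_lt_add, ← sub_eq_add_neg, lt_sub_iff_add_lt']
  exact_mod_cast Iff.rfl

end ComputableReal

theorem exists_nat_div_btwn {x y : ℝ} (hx : 0 ≤ x) (hxy : x < y) :
    ∃ a b : ℕ, 0 < b ∧ x < a / b ∧ (a / b : ℝ) < y := by
  obtain ⟨q, hxq, hqy⟩ := exists_rat_btwn hxy
  have hnum : ((q.num.toNat : ℤ) : ℝ) = q.num :=
    congrArg _ (Int.toNat_of_nonneg (Rat.num_nonneg.2 (Rat.cast_nonneg.1 (hx.trans hxq.le))))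
  refine ⟨q.num.toNat, q.den, q.pos, ?_⟩
  rw [← Int.cast_natCast q.num.toNat, hnum, ← Rat.cast_def]
  exact ⟨hxq, hqy⟩

theorem lt_mul_of_rpow_certificate {x F : ℝ} (hx0 : 0 < x) (hx1 : x ≤ 1) {u v a b c d : ℕ}
    (hab : (a : ℝ) < F * b) (hcd : (c : ℝ) < x ^ F * d) (hlt : u ^ a * d ^ b < c ^ b * v ^ a) :
    (u : ℝ) < x * v := by
  by_contra! huv
  have hlt' : (u ^ a * d ^ b : ℝ) < c ^ b * v ^ a := mod_cast hlt
  refine hlt'.not_ge ?_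
  calc (c ^ b * v ^ a : ℝ) ≤ (x ^ F * d) ^ b * v ^ a := by gcongr
    _ = x ^ (F * b) * (d ^ b * v ^ a) := by
      rw [mul_pow, ← Real.rpow_mul_natCast hx0.le, mul_assoc]
    _ ≤ x ^ (a : ℝ) * (d ^ b * v ^ a) := by
      gcongr ?_ * _
      exact Real.rpow_le_rpow_of_exponent_ge hx0 hx1 hab.le
    _ = (x * v) ^ a * d ^ b := by rw [Real.rpow_natCast]; ring
    _ ≤ u ^ a * d ^ b := by gcongr

theorem exists_rpow_certificate {x F : ℝ} (hx : 0 < x) (hF : 0 < F) {u v : ℕ}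
    (huv : (u : ℝ) < x * v) :
    ∃ a b c d : ℕ, (a : ℝ) < F * b ∧ (c : ℝ) < x ^ F * d ∧ u ^ a * d ^ b < c ^ b * v ^ a := by
  have hv : (0 : ℝ) < v := pos_of_mul_pos_right (u.cast_nonneg.trans_lt huv) hx.le
  have hr0 : (0 : ℝ) ≤ u / v := by positivity
  have hrF : ((u : ℝ) / v) ^ F < x ^ F :=
    Real.rpow_lt_rpow hr0 ((div_lt_iff₀ hv).2 huv) hF
  have hnear : ∀ᶠ t in nhds F, 0 < t ∧ ((u : ℝ) / v) ^ t < x ^ F :=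
    (lt_mem_nhds hF).and
      ((Real.continuousAt_const_rpow' hF.ne').eventually_lt continuousAt_const hrF)
  obtain ⟨l, hlF, hl⟩ := exists_Ioc_subset_of_mem_nhds hnear ⟨0, hF⟩
  obtain ⟨a, b, hb, hlab, habF⟩ := exists_nat_div_btwn (le_max_right l 0) (max_lt hlF hF)
  have hrt : ((u : ℝ) / v) ^ (a / b : ℝ) < x ^ F :=
    (hl ⟨(le_max_left _ _).trans_lt hlab, habF.le⟩).2
  obtain ⟨c, d, hd, hrcd, hcdx⟩ := exists_nat_div_btwn (Real.rpow_nonneg hr0 _) hrt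
  have hb' : (0 : ℝ) < b := Nat.cast_pos.2 hb
  have hd' : (0 : ℝ) < d := Nat.cast_pos.2 hd
  refine ⟨a, b, c, d, (div_lt_iff₀ hb').1 habF, (div_lt_iff₀ hd').1 hcdx, ?_⟩
  have hpow : ((u : ℝ) / v) ^ a < (c / d : ℝ) ^ b := by
    have h := pow_lt_pow_left₀ hrcd (Real.rpow_nonneg hr0 _) hb.ne'
    rwa [← Real.rpow_mul_natCast hr0, div_mul_cancel₀ _ hb'.ne', Real.rpow_natCast] at h
  rw [div_pow, div_pow, div_lt_div_iff₀ (by positivity) (by positivity)] at hpow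
  exact_mod_cast hpow

theorem LeftCE.of_rpow {x F : ℝ} (hx0 : 0 < x) (hx1 : x ≤ 1) (hF0 : 0 < F) (hF : LeftCE F)
    (hxF : LeftCE (x ^ F)) : LeftCE x := by
  have hpow := primrec_pow.to_comp
  have hmul := Primrec.nat_mul.to_comp
  have hu : Computable fun y : (ℕ × ℕ) × (ℕ × ℕ) × ℕ × ℕ => y.1.1 :=
    Computable.fst.comp Computable.fst
  have hv : Computable fun y : (ℕ × ℕ) × (ℕ × ℕ) × ℕ × ℕ => y.1.2 :=
    Computable.snd.comp Computable.fst
  have hab : Computable fun y : (ℕ × ℕ) × (ℕ × ℕ) × ℕ × ℕ => y.2.1 :=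
    Computable.fst.comp Computable.snd
  have hcd : Computable fun y : (ℕ × ℕ) × (ℕ × ℕ) × ℕ × ℕ => y.2.2 :=
    Computable.snd.comp Computable.snd
  have ha := Computable.fst.comp hab
  have hb := Computable.snd.comp hab
  have hre : REPred fun r : ℕ × ℕ => ∃ q : (ℕ × ℕ) × ℕ × ℕ,
      (q.1.1 : ℝ) < F * q.1.2 ∧ (q.2.1 : ℝ) < x ^ F * q.2.2 ∧
        r.1 ^ q.1.1 * q.2.2 ^ q.1.2 < q.2.1 ^ q.1.2 * r.2 ^ q.1.1 :=
    rePred_exists <| rePred_and (rePred_comp hF hab) <| rePred_and (rePred_comp hxF hcd) <|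
      rePred_lt (hmul.comp (hpow.comp hu ha) (hpow.comp (Computable.snd.comp hcd) hb))
        (hmul.comp (hpow.comp (Computable.fst.comp hcd) hb) (hpow.comp hv ha))
  refine hre.of_eq fun ⟨u, v⟩ => ⟨?_, fun huv => ?_⟩
  · rintro ⟨q, hqF, hqx, hlt⟩
    exact lt_mul_of_rpow_certificate hx0 hx1 hqF hqx hlt
  · obtain ⟨a, b, c, d, h⟩ := exists_rpow_certificate hx0 hF0 huv
    exact ⟨((a, b), c, d), h⟩

/-- The indices `i < k` of length `ℓ i ≤ k` that are either the candidate `n` or have been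
enumerated by `H` within `k` steps. -/
def stage (H : ℕ → ℕ → Bool) (ℓ : ℕ → ℕ) (n k : ℕ) : Finset ℕ :=
  (Finset.range k).filter fun i => (decide (i = n) || H i k) && decide (ℓ i ≤ k)

/-- The sum of `(u / v) ^ ℓ i` over the stage, scaled by `v ^ k` so as to be a natural number. -/
def stageWeight (H : ℕ → ℕ → Bool) (ℓ : ℕ → ℕ) (n u v k : ℕ) : ℕ :=
  ∑ i ∈ stage H ℓ n k, u ^ ℓ i * v ^ (k - ℓ i)

section WeightedEnumeration

variable {H : ℕ → ℕ → Bool} {ℓ : ℕ → ℕ}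

theorem mem_stage {n k i : ℕ} :
    i ∈ stage H ℓ n k ↔ i < k ∧ (i = n ∨ H i k = true) ∧ ℓ i ≤ k := by
  simp only [stage, Finset.mem_filter, Finset.mem_range, Bool.and_eq_true, Bool.or_eq_true,
    decide_eq_true_eq]

theorem computable_stageWeight (hH : Computable₂ H) (hℓ : Computable ℓ) :
    Computable fun y : ℕ × (ℕ × ℕ) × ℕ => stageWeight H ℓ y.1 y.2.1.1 y.2.1.2 y.2.2 := by
  have hi : Computable fun z : (ℕ × (ℕ × ℕ) × ℕ) × ℕ => z.2 := Computable.snd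
  have hn : Computable fun z : (ℕ × (ℕ × ℕ) × ℕ) × ℕ => z.1.1 :=
    Computable.fst.comp Computable.fst
  have huv : Computable fun z : (ℕ × (ℕ × ℕ) × ℕ) × ℕ => z.1.2.1 :=
    Computable.fst.comp (Computable.snd.comp Computable.fst)
  have hk : Computable fun z : (ℕ × (ℕ × ℕ) × ℕ) × ℕ => z.1.2.2 :=
    Computable.snd.comp (Computable.snd.comp Computable.fst)
  have hℓi := hℓ.comp hi
  have hpow := primrec_pow.to_comp
  have hterm : Computable fun z : (ℕ × (ℕ × ℕ) × ℕ) × ℕ =>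
      bif (decide (z.2 = z.1.1) || H z.2 z.1.2.2) && decide (ℓ z.2 ≤ z.1.2.2) then
        z.1.2.1.1 ^ ℓ z.2 * z.1.2.1.2 ^ (z.1.2.2 - ℓ z.2) else 0 :=
    Computable.cond
      (Primrec.and.to_comp.comp
        (Primrec.or.to_comp.comp (Primrec.eq.decide.to_comp.comp hi hn) (hH.comp hi hk))
        (Primrec.nat_le.decide.to_comp.comp hℓi hk))
      (Primrec.nat_mul.to_comp.comp (hpow.comp (Computable.fst.comp huv) hℓi)
        (hpow.comp (Computable.snd.comp huv) (Primrec.nat_sub.to_comp.comp hk hℓi)))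
      (Computable.const 0)
  refine (computable_sum_range hterm.to₂ (Computable.snd.comp Computable.snd)).of_eq fun y => ?_
  simp only [stageWeight, stage, Finset.sum_filter, cond_eq_ite]

theorem stageWeight_le {S : Set ℕ} {x Z : ℝ} (hHS : ∀ i k, H i k = true → i ∈ S) (hx : 0 ≤ x)
    (hZ : HasSum (S.indicator fun i => x ^ ℓ i) Z) {n u v k : ℕ} (hn : n ∈ S)
    (huv : (u : ℝ) ≤ x * v) : stageWeight H ℓ n u v k ≤ Z * (v ^ k : ℕ) := by
  have hmem {i : ℕ} (hi : i ∈ stage H ℓ n k) : i ∈ S ∧ ℓ i ≤ k := by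
    obtain ⟨-, rfl | hik, hℓ⟩ := mem_stage.1 hi
    exacts [⟨hn, hℓ⟩, ⟨hHS i k hik, hℓ⟩]
  have hnonneg (i : ℕ) : 0 ≤ S.indicator (fun i => x ^ ℓ i) i :=
    Set.indicator_nonneg (fun i _ => pow_nonneg hx _) i
  calc (stageWeight H ℓ n u v k : ℝ)
      = ∑ i ∈ stage H ℓ n k, (u : ℝ) ^ ℓ i * v ^ (k - ℓ i) := by
        simp only [stageWeight, Nat.cast_sum, Nat.cast_mul, Nat.cast_pow]
    _ ≤ ∑ i ∈ stage H ℓ n k, (x * v) ^ ℓ i * v ^ (k - ℓ i) := by gcongr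
    _ = (∑ i ∈ stage H ℓ n k, S.indicator (fun i => x ^ ℓ i) i) * (v ^ k : ℕ) := by
        rw [Finset.sum_mul]
        refine Finset.sum_congr rfl fun i hi => ?_
        rw [Set.indicator_of_mem (hmem hi).1, mul_pow, mul_assoc, ← pow_add,
          Nat.add_sub_cancel' (hmem hi).2, Nat.cast_pow]
    _ ≤ Z * (v ^ k : ℕ) := by
        gcongr
        exact sum_le_hasSum _ (fun i _ => hnonneg i) hZ

theorem exists_finset_lt_sum {ι : Type*} {S : Set ι} {g : ι → ℝ} {Z : ℝ}
    (hZ : HasSum (S.indicator g) Z) {n : ι} (hn : n ∉ S) (hgn : 0 < g n) :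
    ∃ t : Finset ι, (∀ i ∈ t, i = n ∨ i ∈ S) ∧ Z < ∑ i ∈ t, g i := by
  classical
  obtain ⟨t, ht⟩ := (hZ.eventually (lt_mem_nhds (sub_lt_self Z hgn))).exists
  refine ⟨insert n (t.filter (· ∈ S)), ?_, ?_⟩
  · simp +contextual [or_imp]
  · rw [Finset.sum_insert (by simp [hn]), Finset.sum_filter]
    simp only [Set.indicator_apply] at ht
    linarith

theorem exists_nat_div_lt_sum_pow {t : Finset ℕ} {x Z : ℝ} (hx : 0 < x)
    (ht : Z < ∑ i ∈ t, x ^ ℓ i) :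
    ∃ u v : ℕ, 0 < v ∧ (u : ℝ) < x * v ∧ Z < ∑ i ∈ t, ((u : ℝ) / v) ^ ℓ i := by
  have hcont : Continuous fun r : ℝ => ∑ i ∈ t, r ^ ℓ i := by fun_prop
  obtain ⟨l, hlx, hl⟩ := exists_Ioc_subset_of_mem_nhds
    (hcont.continuousAt.eventually_const_lt ht) ⟨0, hx⟩
  obtain ⟨u, v, hv, hluv, huvx⟩ := exists_nat_div_btwn (le_max_right l 0) (max_lt hlx hx)
  exact ⟨u, v, hv, (div_lt_iff₀ (Nat.cast_pos.2 hv)).1 huvx,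
    hl ⟨(le_max_left _ _).trans_lt hluv, huvx.le⟩⟩

theorem exists_lt_stageWeight {S : Set ℕ} {x Z : ℝ} (hmono : ∀ i, Monotone (H i))
    (hHS : ∀ i, i ∈ S ↔ ∃ k, H i k = true) (hx : 0 < x)
    (hZ : HasSum (S.indicator fun i => x ^ ℓ i) Z) {n : ℕ} (hn : n ∉ S) :
    ∃ u v k : ℕ, (u : ℝ) < x * v ∧ Z * (v ^ k : ℕ) < stageWeight H ℓ n u v k := by
  obtain ⟨t, htS, htZ⟩ := exists_finset_lt_sum hZ hn (pow_pos hx (ℓ n))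
  obtain ⟨u, v, hv, huv, hlt⟩ := exists_nat_div_lt_sum_pow hx htZ
  have hstage : ∀ᶠ k in atTop, ∀ i ∈ t, i ∈ stage H ℓ n k := by
    refine (Finset.eventually_all t).2 fun i hi => ?_
    have henum : ∀ᶠ k in atTop, i = n ∨ H i k = true := by
      rcases htS i hi with rfl | hiS
      · exact Eventually.of_forall fun _ => Or.inl rfl
      · obtain ⟨k₀, hk₀⟩ := (hHS i).1 hiS
        exact (eventually_ge_atTop k₀).mono fun k hk =>
          Or.inr (Bool.le_iff_imp.1 (hmono i hk) hk₀)
    filter_upwards [eventually_gt_atTop i, henum, eventually_ge_atTop (ℓ i)] with k hik hen hℓk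
    exact mem_stage.2 ⟨hik, hen, hℓk⟩
  obtain ⟨k, hk⟩ := hstage.exists
  refine ⟨u, v, k, huv, ?_⟩
  have hv' : (0 : ℝ) < v := Nat.cast_pos.2 hv
  calc Z * (v ^ k : ℕ) < (∑ i ∈ t, ((u : ℝ) / v) ^ ℓ i) * (v ^ k : ℕ) := by gcongr
    _ ≤ (∑ i ∈ stage H ℓ n k, ((u : ℝ) / v) ^ ℓ i) * (v ^ k : ℕ) := by
        gcongr
        exact hk
    _ = stageWeight H ℓ n u v k := by
        simp only [stageWeight, Nat.cast_sum, Nat.cast_mul, Nat.cast_pow, Finset.sum_mul]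
        refine Finset.sum_congr rfl fun i hi => ?_
        rw [div_pow, pow_sub₀ _ hv'.ne' (mem_stage.1 hi).2.2]
        ring

theorem computablePred_of_hasSum_nat {S : Set ℕ} {x Z : ℝ} (hS : REPred (· ∈ S))
    (hℓ : Computable ℓ) (hx : 0 < x) (hxl : LeftCE x) (hZr : RightCE Z)
    (hZ : HasSum (S.indicator fun i => x ^ ℓ i) Z) : ComputablePred (· ∈ S) := by
  refine ComputablePred.computable_iff_re_compl_re'.2 ⟨hS, ?_⟩
  obtain ⟨H, hH, hmono, hHS⟩ := exists_monotone_stages hS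
  have hpow : Computable fun y : ℕ × (ℕ × ℕ) × ℕ => y.2.1.2 ^ y.2.2 :=
    primrec_pow.to_comp.comp
      (Computable.snd.comp (Computable.fst.comp Computable.snd))
      (Computable.snd.comp Computable.snd)
  have hbelow := rePred_comp hxl (Computable.fst.comp (Computable.snd (α := ℕ) (β := (ℕ × ℕ) × ℕ)))
  have hover := rePred_comp hZr ((computable_stageWeight hH hℓ).pair hpow)
  have hre := rePred_exists (p := fun n (q : (ℕ × ℕ) × ℕ) => (q.1.1 : ℝ) < x * q.1.2 ∧
      Z * (q.1.2 ^ q.2 : ℕ) < stageWeight H ℓ n q.1.1 q.1.2 q.2) (rePred_and hbelow hover)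
  refine hre.of_eq fun n => ⟨?_, fun hn => ?_⟩
  · rintro ⟨q, hqx, hqZ⟩ hn
    exact hqZ.not_ge (stageWeight_le (fun i k h => (hHS i).2 ⟨k, h⟩) hx.le hZ hn hqx.le)
  · obtain ⟨u, v, k, huv, hlt⟩ := exists_lt_stageWeight hmono hHS hx hZ hn
    exact ⟨((u, v), k), huv, hlt⟩

end WeightedEnumeration

theorem computablePred_of_hasSum {α : Type*} [Primcodable α] {S : α → Prop} {ℓ : α → ℕ} {x Z : ℝ}
    (hS : REPred S) (hℓ : Computable ℓ) (hx : 0 < x) (hxl : LeftCE x) (hZr : RightCE Z)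
    (hZ : HasSum (fun a : {a // S a} => x ^ ℓ a) Z) : ComputablePred S := by
  let e : {a // S a} → ℕ := fun a => Encodable.encode a.1
  have he : Function.Injective e := Encodable.encode_injective.comp Subtype.val_injective
  have hrange : REPred (· ∈ Set.range e) := by
    have hSa := rePred_comp hS (Computable.snd (α := ℕ))
    have heq := rePred_eq (Computable.encode.comp (Computable.snd (α := ℕ) (β := α))) Computable.fst
    have hcode := rePred_exists (p := fun n a => S a ∧ Encodable.encode a = n)
      (rePred_and hSa heq)
    exact hcode.of_eq fun n => by simp [e]
  let weight : ℕ → ℕ := fun n => ((Encodable.decode n : Option α).map ℓ).getD 0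
  have hweight : Computable weight :=
    Computable.option_getD (Computable.option_map Computable.decode (hℓ.comp Computable.snd).to₂)
      (Computable.const 0)
  have hsum : HasSum ((Set.range e).indicator fun n => x ^ weight n) Z := by
    rw [← hasSum_subtype_iff_indicator]
    refine (he.hasSum_range_iff (f := fun n => x ^ weight n)).2 ?_
    simpa only [weight, e, Function.comp_def, Encodable.encodek, Option.map_some,
      Option.getD_some] using hZ
  obtain ⟨_, hdec⟩ := computablePred_of_hasSum_nat hrange hweight hx hxl hZr hsum
  refine ComputablePred.of_eq ⟨fun a => inferInstance, hdec.comp Computable.encode⟩ fun a => ?_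
  simp [e]

section Kraft

variable {α : Type*}

theorem flatten_eq_nil_of_nil_notMem {S : Set (List α)} (hnil : [] ∉ S) {L : List (List α)}
    (hL : ∀ w ∈ L, w ∈ S) (h : L.flatten = []) : L = [] := by
  refine List.eq_nil_iff_forall_not_mem.2 fun w hw => hnil ?_
  rw [← List.flatten_eq_nil_iff.1 h w hw]
  exact hL w hw

theorem uniquelyDecodable_of_isAntichain_isPrefix {S : Set (List α)}
    (hS : IsAntichain (· <+: ·) S) (hnil : [] ∉ S) : InformationTheory.UniquelyDecodable S := by
  intro L₁
  induction L₁ with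
  | nil => exact fun L₂ _ h₂ h => (flatten_eq_nil_of_nil_notMem hnil h₂ h.symm).symm
  | cons w L ih =>
    rintro (_ | ⟨w', L'⟩) h₁ h₂ h
    · exact flatten_eq_nil_of_nil_notMem hnil h₁ h
    · obtain ⟨hw, hL⟩ := List.forall_mem_cons.1 h₁
      obtain ⟨hw', hL'⟩ := List.forall_mem_cons.1 h₂
      simp only [List.flatten_cons] at h
      have hpre : w' <+: w ++ L.flatten := h ▸ List.prefix_append _ _
      obtain rfl : w = w' := by
        rcases List.prefix_or_prefix_of_prefix (List.prefix_append w L.flatten) hpre with hp | hp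
        · exact hS.eq hw hw' hp
        · exact (hS.eq hw' hw hp).symm
      rw [ih L' hL hL' (List.append_cancel_left h)]

variable [Fintype α] [Nonempty α]

theorem sum_pow_length_le {s : Finset (List α)} (hs : IsAntichain (· <+: ·) (s : Set (List α)))
    (hnil : [] ∉ s) {x : ℝ} (hx0 : 0 ≤ x) (hx1 : Fintype.card α * x ≤ 1) :
    ∑ w ∈ s, x ^ w.length ≤ Fintype.card α * x := by
  have hcard : (Fintype.card α : ℝ) ≠ 0 := Nat.cast_ne_zero.2 Fintype.card_ne_zero
  have hkraft : ∑ w ∈ s, (1 / Fintype.card α : ℝ) ^ w.length ≤ 1 :=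
    InformationTheory.kraft_mcmillan_inequality
      (uniquelyDecodable_of_isAntichain_isPrefix hs (by exact_mod_cast hnil))
  calc ∑ w ∈ s, x ^ w.length
      = ∑ w ∈ s, (Fintype.card α * x) ^ w.length * (1 / Fintype.card α : ℝ) ^ w.length := by
        refine Finset.sum_congr rfl fun w _ => ?_
        rw [← mul_pow, mul_one_div, mul_div_cancel_left₀ _ hcard]
    _ ≤ ∑ w ∈ s, Fintype.card α * x * (1 / Fintype.card α : ℝ) ^ w.length := by
        gcongr with w hw
        refine pow_le_of_le_one (by positivity) hx1 (mt List.eq_nil_of_length_eq_zero ?_)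
        exact fun h => hnil (h ▸ hw)
    _ ≤ Fintype.card α * x := by
        rw [← Finset.mul_sum]
        exact mul_le_of_le_one_right (by positivity) hkraft

theorem exists_hasSum_pow_length {S : Set (List α)} (hS : IsAntichain (· <+: ·) S)
    (hnil : [] ∉ S) {x : ℝ} (hx0 : 0 ≤ x) (hx1 : Fintype.card α * x ≤ 1) :
    ∃ Z ≤ Fintype.card α * x, HasSum (fun w : S => x ^ (w : List α).length) Z := by
  have hbound (t : Finset S) : ∑ w ∈ t, x ^ (w : List α).length ≤ Fintype.card α * x := by
    have hsub : ((t.map (Function.Embedding.subtype (· ∈ S)) : Finset (List α)) :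
        Set (List α)) ⊆ S := by simp
    have hsum := sum_pow_length_le (hS.subset hsub) (fun h => hnil (hsub h)) hx0 hx1
    rwa [Finset.sum_map] at hsum
  have hsummable := summable_of_sum_le (fun w : S => pow_nonneg hx0 _) hbound
  exact ⟨_, hsummable.tsum_le_of_sum_le hbound, hsummable.hasSum⟩

end Kraft

/-- The Boltzmann factor `2 ^ (-1 / T)` of a single bit at temperature `T`, so that a program `p`
contributes `boltzmannFactor T ^ p.length` to the partition function. -/
noncomputable def boltzmannFactor (T : ℝ) : ℝ :=
  2 ^ (-1 / T)

section Thermodynamics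

variable {U : List Bool →. List Bool} {T : ℝ}

theorem boltzmannFactor_pos (T : ℝ) : 0 < boltzmannFactor T :=
  Real.rpow_pos_of_pos two_pos _

theorem boltzmannFactor_lt_half (hT0 : 0 < T) (hT1 : T < 1) : boltzmannFactor T < 1 / 2 := by
  have hexp : -1 / T < -1 := by rw [div_lt_iff₀ hT0]; linarith
  simpa [boltzmannFactor, Real.rpow_neg_one] using Real.rpow_lt_rpow_of_exponent_lt one_lt_two hexp

theorem boltzmannFactor_pow (T : ℝ) (n : ℕ) :
    boltzmannFactor T ^ n = (2 : ℝ) ^ (-(n : ℝ) / T) := by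
  rw [boltzmannFactor, ← Real.rpow_mul_natCast zero_le_two, div_mul_eq_mul_div, neg_one_mul]

theorem boltzmannFactor_rpow_Ffun (hT : T ≠ 0) (hZ : 0 < Zfun U T) :
    boltzmannFactor T ^ Ffun U T = Zfun U T := by
  have hexp : -1 / T * Ffun U T = Real.logb 2 (Zfun U T) := by rw [Ffun]; field_simp
  rw [boltzmannFactor, ← Real.rpow_mul zero_le_two, hexp,
    Real.rpow_logb two_pos (by norm_num) hZ]

theorem Ffun_pos (hT : 0 < T) (hZ0 : 0 < Zfun U T) (hZ1 : Zfun U T < 1) : 0 < Ffun U T :=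
  mul_pos_of_neg_of_neg (neg_neg_of_pos hT) (Real.logb_neg one_lt_two hZ0 hZ1)

theorem PrefixFree.nil_notMem_dom (hU : PrefixFree U)
    (hdom : ¬ ComputablePred fun p => (U p).Dom) : ¬ (U []).Dom := by
  intro hnil
  have heq : PrimrecPred fun p : List Bool => p = [] :=
    Primrec.eq.comp Primrec.id (Primrec.const [])
  refine hdom (heq.computablePred.of_eq fun p => ⟨?_, fun hp => ?_⟩)
  · rintro rfl
    exact hnil
  · exact (hU [] p hnil hp List.nil_prefix).symm

theorem exists_mem_dom (hdom : ¬ ComputablePred fun p => (U p).Dom) : ∃ p, (U p).Dom := by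
  by_contra! hempty
  have hfalse : ComputablePred fun _ : List Bool => False :=
    ⟨fun _ => instDecidableFalse, Computable.const false⟩
  exact hdom (hfalse.of_eq fun p => (iff_false_intro (hempty p)).symm)

theorem PrefixFree.hasSum_Zfun_and_lt_one (hU : PrefixFree U) (hnil : ¬ (U []).Dom) (hT0 : 0 < T)
    (hT1 : T < 1) :
    HasSum (fun p : {p // (U p).Dom} => boltzmannFactor T ^ (p : List Bool).length) (Zfun U T) ∧
      Zfun U T < 1 := by
  have hanti : IsAntichain (· <+: ·) {p | (U p).Dom} := fun p hp q hq hne hpq =>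
    hne (hU p q hp hq hpq)
  have hhalf := boltzmannFactor_lt_half hT0 hT1
  have hcard : Fintype.card Bool * boltzmannFactor T < 1 := by
    rw [Fintype.card_bool, Nat.cast_two]; linarith
  obtain ⟨Z, hle, hZ⟩ :=
    exists_hasSum_pow_length hanti hnil (boltzmannFactor_pos T).le hcard.le
  have hZfun : Zfun U T = Z := by
    rw [← hZ.tsum_eq]
    exact tsum_congr fun p => (boltzmannFactor_pow T _).symm
  rw [hZfun]
  exact ⟨hZ, hle.trans_lt hcard⟩

theorem Zfun_pos
    (hZ : HasSum (fun p : {p // (U p).Dom} => boltzmannFactor T ^ (p : List Bool).length)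
      (Zfun U T)) (hne : ∃ p, (U p).Dom) : 0 < Zfun U T := by
  obtain ⟨p, hp⟩ := hne
  have hpos (n : ℕ) : 0 < boltzmannFactor T ^ n := pow_pos (boltzmannFactor_pos T) n
  exact (hpos p.length).trans_le (le_hasSum hZ ⟨p, hp⟩ fun q _ => (hpos _).le)

end Thermodynamics

section UndecidableDomain

theorem nat_pair_le_pair {a b c d : ℕ} (hab : a ≤ b) (hcd : c ≤ d) :
    Nat.pair a c ≤ Nat.pair b d :=
  (StrictMono.monotone (fun _ _ => Nat.pair_lt_pair_left c) hab).trans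
    (StrictMono.monotone (fun _ _ => Nat.pair_lt_pair_right b) hcd)

theorem encode_le_encode_replicate_true {p : List Bool} {n : ℕ} (hp : p.length ≤ n) :
    Encodable.encode p ≤ Encodable.encode (List.replicate n true) := by
  induction n generalizing p with
  | zero => rw [List.eq_nil_of_length_eq_zero (Nat.le_zero.1 hp), List.replicate_zero]
  | succ n ih =>
    cases p with
    | nil => exact Nat.zero_le _
    | cons b p =>
      rw [List.replicate_succ, Encodable.encode_list_cons, Encodable.encode_list_cons]
      refine Nat.succ_le_succ (nat_pair_le_pair ?_ (ih (Nat.le_of_succ_le_succ hp)))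
      cases b <;> decide

theorem primrec_replicate {α : Type*} [Primcodable α] (a : α) :
    Primrec fun n : ℕ => List.replicate n a :=
  (Primrec.list_map Primrec.list_range (Primrec₂.const a)).of_eq fun n => by
    rw [List.map_const', List.length_range]

theorem exists_computable_bound_of_length_le {g : List Bool → ℕ} (hg : Computable g) :
    ∃ B : ℕ → ℕ, Computable B ∧ ∀ p n, p.length ≤ n → g p ≤ B n := by
  let value : ℕ → ℕ := fun i => ((Encodable.decode i : Option (List Bool)).map g).getD 0
  have hvalue : Computable value :=
    Computable.option_getD (Computable.option_map Computable.decode (hg.comp Computable.snd).to₂)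
      (Computable.const 0)
  have hcode : Computable fun n => Encodable.encode (List.replicate n true) + 1 :=
    (Primrec.succ.comp (Primrec.encode.comp (primrec_replicate true))).to_comp
  refine ⟨_, computable_sum_range (hvalue.comp Computable.snd).to₂ hcode, fun p n hp => ?_⟩
  have hmem := Finset.mem_range_succ_iff.2 (encode_le_encode_replicate_true hp)
  calc g p = value (Encodable.encode p) := by
        simp only [value, Encodable.encodek, Option.map_some, Option.getD_some]
    _ ≤ _ := Finset.single_le_sum (f := value) (fun _ _ => Nat.zero_le _) hmem

/-- The self-delimiting unary numeral `1ᵏ0`. -/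
def tally (k : ℕ) : List Bool :=
  List.replicate k true ++ [false]

theorem length_tally (k : ℕ) : (tally k).length = k + 1 := by
  simp only [tally, List.length_append, List.length_replicate, List.length_singleton]

theorem tally_eq_of_isPrefix {a b : ℕ} (h : tally a <+: tally b) : tally a = tally b := by
  refine (List.prefix_concat_iff.1 h).resolve_right fun hpre => ?_
  have hfalse : false ∈ List.replicate b true :=
    hpre.subset (List.mem_append_right _ (List.mem_singleton_self false))
  exact Bool.false_ne_true (List.eq_of_mem_replicate hfalse)

theorem OptimalMachine.exists_program_length_le {U : List Bool →. List Bool}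
    (hU : OptimalMachine U) {s : ℕ → List Bool} (hs : Computable s) :
    ∃ d, ∀ k, ∃ p, s k ∈ U p ∧ p.length ≤ k + 1 + d := by
  let C : List Bool →. List Bool := fun p =>
    ((bif decide (p = tally (p.length - 1)) then some (s (p.length - 1)) else none :
      Option (List Bool)) : Part (List Bool))
  have hlen : Primrec fun p : List Bool => p.length - 1 :=
    Primrec.pred.comp Primrec.list_length
  have htally : Primrec tally :=
    Primrec.list_append.comp (primrec_replicate true) (Primrec.const [false])
  have hC : Partrec C := Computable.ofOption <| Computable.cond
    (Primrec.eq.comp Primrec.id (htally.comp hlen)).decide.to_comp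
    (Computable.option_some.comp (hs.comp hlen.to_comp)) (Computable.const none)
  have hdom {p : List Bool} (hp : (C p).Dom) : p = tally (p.length - 1) := by
    by_contra h
    simp [C, h] at hp
  have hfree : PrefixFree C := fun p q hp hq hpq => by
    rw [hdom hp, hdom hq] at hpq ⊢
    exact tally_eq_of_isPrefix hpq
  obtain ⟨d, hd⟩ := hU.2.2 C hC hfree
  refine ⟨d, fun k => ?_⟩
  rw [← length_tally]
  exact hd (tally k) (s k) (by simp [C, length_tally])

theorem OptimalMachine.not_computablePred_dom {U : List Bool →. List Bool}
    (hU : OptimalMachine U) : ¬ ComputablePred fun p => (U p).Dom := by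
  intro hdec
  obtain ⟨g, hg, hgU⟩ := exists_computable_extension hU.1 hdec
  obtain ⟨B, hB, hgB⟩ :=
    exists_computable_bound_of_length_le (Computable.list_length.comp hg)
  let long : ℕ → List Bool := fun k => List.replicate (B (2 * k) + 1) true
  have hlong : Computable long := (primrec_replicate true).to_comp.comp
    (Computable.succ.comp (hB.comp Primrec.nat_double.to_comp))
  obtain ⟨d, hd⟩ := hU.exists_program_length_le hlong
  obtain ⟨p, hp, hlen⟩ := hd (d + 1)
  have hle := hgB p (2 * (d + 1)) (by omega)
  rw [hgU p _ hp, List.length_replicate] at hle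
  omega

end UndecidableDomain

theorem no_common_fixed_point_Z_F_general {U : List Bool →. List Bool} (hU : Partrec U)
    (hfree : PrefixFree U) (hdom : ¬ ComputablePred fun p => (U p).Dom) {T : ℝ} (hT0 : 0 < T)
    (hT1 : T < 1) (hZ : ComputableReal (Zfun U T)) : ¬ LeftCE (Ffun U T) := by
  intro hF
  have hx0 := boltzmannFactor_pos T
  have hx1 : boltzmannFactor T ≤ 1 := by linarith [boltzmannFactor_lt_half hT0 hT1]
  obtain ⟨hsum, hZ1⟩ := hfree.hasSum_Zfun_and_lt_one (hfree.nil_notMem_dom hdom) hT0 hT1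
  have hZ0 : 0 < Zfun U T := Zfun_pos hsum (exists_mem_dom hdom)
  have hxF : boltzmannFactor T ^ Ffun U T = Zfun U T := boltzmannFactor_rpow_Ffun hT0.ne' hZ0
  have hx : LeftCE (boltzmannFactor T) :=
    hF.of_rpow hx0 hx1 (Ffun_pos hT0 hZ0 hZ1) (hxF ▸ hZ.leftCE)
  exact hdom (computablePred_of_hasSum hU.dom_re Computable.list_length hx0 hx
    (hZ.rightCE hZ0.le) hsum)

theorem no_common_fixed_point_Z_F (U : List Bool →. List Bool)
    (hU : OptimalMachine U) :
    ¬ ∃ T : ℝ, 0 < T ∧ T < 1 ∧ ComputableReal (Zfun U T) ∧ ComputableReal (Ffun U T) := by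
  rintro ⟨T, hT0, hT1, hZ, hF⟩
  exact no_common_fixed_point_Z_F_general hU.1 hU.2.1 hU.not_computablePred_dom hT0 hT1 hZ
    hF.leftCE
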